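/- For each n ∈ N, there is an isomorphism of (N_n, N_n)-bimodules N_{n+1} ≅ (N_n ⊗_{N_{n-1}} N_n) ⊕ N_n, where N_{n+1} is viewed as an (N_n, N_n)-bimodule by restriction; the summand N_n maps in via the inclusion and the summand N_n ⊗_{N_{n-1}} N_n maps in via a ⊗ b ↦ a u_n b. -/

import Mathlib

/-- The defining relations of the nilcoxeter algebra `N_n`: the generators
`u_1, ..., u_{n-1}` (indexed here by `Fin (n-1)`) square to zero, distant generators
commute, and adjacent generators satisfy the braid relation. -/
inductive NilCoxeterRel (F : Type) [Field F] (n : ℕ) :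
    FreeAlgebra F (Fin (n - 1)) → FreeAlgebra F (Fin (n - 1)) → Prop
  | sq (i : Fin (n - 1)) :
      NilCoxeterRel F n (FreeAlgebra.ι F i * FreeAlgebra.ι F i) 0
  | comm (i j : Fin (n - 1)) (h : (i : ℕ) + 1 < j ∨ (j : ℕ) + 1 < i) :
      NilCoxeterRel F n (FreeAlgebra.ι F i * FreeAlgebra.ι F j)
        (FreeAlgebra.ι F j * FreeAlgebra.ι F i)
  | braid (i j : Fin (n - 1)) (h : (j : ℕ) = (i : ℕ) + 1) :
      NilCoxeterRel F n (FreeAlgebra.ι F i * FreeAlgebra.ι F j * FreeAlgebra.ι F i)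
        (FreeAlgebra.ι F j * FreeAlgebra.ι F i * FreeAlgebra.ι F j)

/-- The nilcoxeter algebra `N_n` over the field `F`. -/
abbrev NilCoxeter (F : Type) [Field F] (n : ℕ) := RingQuot (NilCoxeterRel F n)

/-- The generators `u_i` of the nilcoxeter algebra. -/
noncomputable def NilCoxeter.u (F : Type) [Field F] (n : ℕ) (i : Fin (n - 1)) :
    NilCoxeter F n :=
  RingQuot.mkAlgHom F (NilCoxeterRel F n) (FreeAlgebra.ι F i)

/-- The inclusion `N_n → N_{n+1}` sending each generator `u_i` to `u_i`. -/
noncomputable def NilCoxeter.incl (F : Type) [Field F] (n : ℕ) :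
    NilCoxeter F n →ₐ[F] NilCoxeter F (n + 1) :=
  RingQuot.liftAlgHom F
    ⟨FreeAlgebra.lift F
        (fun i => NilCoxeter.u F (n + 1) (Fin.castLE (Nat.sub_le n 1) i)), by
      rintro x y (⟨i⟩ | ⟨i, j, h⟩ | ⟨i, j, h⟩) <;>
        simp only [map_mul, map_zero, FreeAlgebra.lift_ι_apply]
      · have := RingQuot.mkAlgHom_rel F
          (NilCoxeterRel.sq (F := F) (n := n + 1) (Fin.castLE (Nat.sub_le n 1) i))
        simpa [NilCoxeter.u] using this
      · have := RingQuot.mkAlgHom_rel F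
          (NilCoxeterRel.comm (F := F) (n := n + 1) (Fin.castLE (Nat.sub_le n 1) i)
            (Fin.castLE (Nat.sub_le n 1) j) (by simpa using h))
        simpa [NilCoxeter.u] using this
      · have := RingQuot.mkAlgHom_rel F
          (NilCoxeterRel.braid (F := F) (n := n + 1) (Fin.castLE (Nat.sub_le n 1) i)
            (Fin.castLE (Nat.sub_le n 1) j) (by simpa using h))
        simpa [NilCoxeter.u] using this⟩

open scoped TensorProduct

namespace NCX

section TQ

variable {F A B X : Type} [Field F] [Semiring A] [Algebra F A] [Semiring B]
  [Algebra F B] (i : B →ₐ[F] A)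

/-- Additive inverses on the tensor product. -/
noncomputable abbrev tgrp (F A : Type) [Field F] [Semiring A] [Algebra F A] :
    AddCommGroup (A ⊗[F] A) := Module.addCommMonoidToAddCommGroup F

attribute [local instance] tgrp

/-- The balancing relations. -/
def W : Submodule F (A ⊗[F] A) :=
  Submodule.span F {t | ∃ (c : B) (x y : A), t = (x * i c) ⊗ₜ[F] y - x ⊗ₜ[F] (i c * y)}

/-- The tensor product of `A` with itself over `B`. -/
def TQ : Type := (A ⊗[F] A) ⧸ W i

noncomputable instance : AddCommGroup (TQ i) :=
  inferInstanceAs (AddCommGroup ((A ⊗[F] A) ⧸ W i))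

noncomputable instance : Module F (TQ i) :=
  inferInstanceAs (Module F ((A ⊗[F] A) ⧸ W i))

/-- The projection. -/
noncomputable def pq : A ⊗[F] A →ₗ[F] TQ i := (W i).mkQ

lemma pq_surj : Function.Surjective (pq i) := (W i).mkQ_surjective

/-- The canonical balanced bilinear map. -/
noncomputable def tq : A →ₗ[F] A →ₗ[F] TQ i := (TensorProduct.mk F A A).compr₂ (pq i)

lemma tq_bal (c : B) (x y : A) : tq i (x * i c) y = tq i x (i c * y) := by
  have : pq i ((x * i c) ⊗ₜ[F] y - x ⊗ₜ[F] (i c * y)) = 0 := by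
    refine (Submodule.Quotient.mk_eq_zero (W i)).2 ?_
    exact Submodule.subset_span ⟨c, x, y, rfl⟩
  rw [map_sub, sub_eq_zero] at this
  simpa [tq] using this

/-- Lifting balanced bilinear maps. -/
noncomputable def tlift [AddCommGroup X] [Module F X] (f : A →ₗ[F] A →ₗ[F] X)
    (hf : ∀ c x y, f (x * i c) y = f x (i c * y)) : TQ i →ₗ[F] X :=
  (W i).liftQ (TensorProduct.lift f) (by
    rw [W, Submodule.span_le]
    rintro _ ⟨c, x, y, rfl⟩
    simp [hf])

@[simp] lemma tlift_tq [AddCommGroup X] [Module F X] (f : A →ₗ[F] A →ₗ[F] X) (hf) (x y : A) :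
    tlift i f hf (tq i x y) = f x y := by
  exact ((W i).liftQ_apply _ _).trans (TensorProduct.lift.tmul x y)

lemma tq_ext [AddCommMonoid X] [Module F X] {f g : TQ i →ₗ[F] X} (h : ∀ x y, f (tq i x y) = g (tq i x y)) : f = g := by
  apply LinearMap.ext
  intro t
  obtain ⟨t, rfl⟩ := pq_surj i t
  induction t using TensorProduct.induction_on with
  | zero => simp
  | tmul x y => exact h x y
  | add x y hx hy => simp only [map_add, hx, hy]

/-- left multiplication -/
noncomputable def L (a : A) : TQ i →ₗ[F] TQ i :=
  tlift i ((tq i).comp (LinearMap.mulLeft F a)) (by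
    intro c x y
    simp [← mul_assoc, tq_bal])

@[simp] lemma L_tq (a x y : A) : L i a (tq i x y) = tq i (a * x) y :=
  tlift_tq i _ _ x y

/-- right multiplication -/
noncomputable def R (a : A) : TQ i →ₗ[F] TQ i :=
  tlift i ((tq i).compl₂ (LinearMap.mulRight F a)) (by
    intro c x y
    simp [mul_assoc, tq_bal])

@[simp] lemma R_tq (a x y : A) : R i a (tq i x y) = tq i x (y * a) :=
  tlift_tq i _ _ x y

lemma L_mul (a b : A) (t : TQ i) : L i (a * b) t = L i a (L i b t) := by
  have : L i (a * b) = (L i a).comp (L i b) := tq_ext i (by intro x y; simp [mul_assoc])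
  rw [this]; rfl

lemma R_mul (a b : A) (t : TQ i) : R i (a * b) t = R i b (R i a t) := by
  have : R i (a * b) = (R i b).comp (R i a) := tq_ext i (by intro x y; simp [mul_assoc])
  rw [this]; rfl

lemma L_R (a b : A) (t : TQ i) : L i a (R i b t) = R i b (L i a t) := by
  have : (L i a).comp (R i b) = (R i b).comp (L i a) := tq_ext i (by intro x y; simp)
  exact congrArg (fun f => f t) this

lemma L_add (a b : A) : L i (a + b) = L i a + L i b := tq_ext i (by intro x y; simp [add_mul])
lemma L_smul (r : F) (a : A) : L i (r • a) = r • L i a := tq_ext i (by intro x y; simp)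
lemma R_add (a b : A) : R i (a + b) = R i a + R i b := tq_ext i (by intro x y; simp [mul_add])
lemma R_smul (r : F) (a : A) : R i (r • a) = r • R i a := tq_ext i (by intro x y; simp)
lemma L_one : L i 1 = LinearMap.id := tq_ext i (by intro x y; simp)
lemma R_one : R i 1 = LinearMap.id := tq_ext i (by intro x y; simp)

/-- The map `a ⊗ b ↦ φ(a) b`. -/
noncomputable def sg (φ : A →ₗ[F] TQ i) (h : ∀ c a, φ (a * i c) = R i (i c) (φ a)) :
    TQ i →ₗ[F] TQ i :=
  tlift i (LinearMap.mk₂ F (fun a b => R i b (φ a)) (by intros; simp) (by intros; simp)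
    (by intros; simp [R_add]) (by intros; simp [R_smul])) (by
      intro c x y
      simp [h, R_mul])

@[simp] lemma sg_tq (φ : A →ₗ[F] TQ i) (h) (a b : A) : sg i φ h (tq i a b) = R i b (φ a) := by
  simp [sg]

lemma sg_R (φ : A →ₗ[F] TQ i) (h) (b : A) (t : TQ i) :
    sg i φ h (R i b t) = R i b (sg i φ h t) := by
  have : (sg i φ h).comp (R i b) = (R i b).comp (sg i φ h) :=
    tq_ext i (by intro x y; simp [R_mul])
  exact congrArg (fun f => f t) this

/-- Properties of the map `φ` (with `u` the last generator). -/
structure Good (u : A) (φ : A →ₗ[F] TQ i) : Prop where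
  left : ∀ c a, φ (i c * a) = L i (i c) (φ a)
  right : ∀ c a, φ (a * i c) = R i (i c) (φ a)
  one : φ 1 = 0
  sq : ∀ a, sg i φ right (φ a) = 0
  gen : φ u = tq i u u
  braid : ∀ a, sg i φ right (L i u (φ a)) = L i u (φ (u * a))

/-- The action of `A` on the sum. -/
noncomputable def lam : A →ₐ[F] Module.End F (TQ i × A) :=
  AlgHom.ofLinearMap
    { toFun := fun a => (L i a).prodMap (LinearMap.mulLeft F a)
      map_add' := by intro a b; ext x <;> simp [L_add, add_mul]
      map_smul' := by intro a b; ext x <;> simp [L_smul] }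
    (by ext x <;> simp [L_one])
    (by intro a b; apply LinearMap.ext; intro x; ext <;> simp [L_mul, mul_assoc])

@[simp] lemma lam_apply (a : A) (p : TQ i × A) : lam i a p = (L i a p.1, a * p.2) := rfl

/-- The action of the new generator. -/
noncomputable def Sop (φ : A →ₗ[F] TQ i) (h : ∀ c a, φ (a * i c) = R i (i c) (φ a)) :
    Module.End F (TQ i × A) :=
  (LinearMap.inl F (TQ i) A).comp (LinearMap.coprod (sg i φ h) (tq i 1))

@[simp] lemma Sop_apply (φ : A →ₗ[F] TQ i) (h) (p : TQ i × A) :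
    Sop i φ h p = (sg i φ h p.1 + tq i 1 p.2, 0) := rfl

variable {i} {u : A} {φ : A →ₗ[F] TQ i}

lemma end_ext {f g : Module.End F (TQ i × A)} (h1 : ∀ a b, f (tq i a b, 0) = g (tq i a b, 0))
    (h2 : ∀ x, f (0, x) = g (0, x)) : f = g := by
  apply LinearMap.prod_ext
  · apply tq_ext; exact h1
  · apply LinearMap.ext; exact h2

lemma Good.S_sq (h : Good i u φ) : Sop i φ h.right * Sop i φ h.right = 0 := by
  apply end_ext
  · intro a b; simp [sg_R, h.sq]
  · intro x; simp [h.one]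

lemma Good.S_comm (h : Good i u φ) (c : B) :
    Sop i φ h.right * lam i (i c) = lam i (i c) * Sop i φ h.right := by
  apply end_ext
  · intro a b; simp [h.left, L_R]
  · intro x
    have := tq_bal i c 1 x
    rw [one_mul] at this
    simp [this]

lemma Good.S_braid (h : Good i u φ) :
    lam i u * Sop i φ h.right * lam i u = Sop i φ h.right * lam i u * Sop i φ h.right := by
  apply end_ext
  · intro a b; simp [L_R, sg_R, h.braid]
  · intro x; simp [h.gen]

end TQ

section N

variable (F : Type) [Field F]

/-- Natural-number indexed generators. -/
noncomputable def v (n k : ℕ) : NilCoxeter F n :=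
  if h : k < n - 1 then NilCoxeter.u F n ⟨k, h⟩ else 0

lemma v_sq (n k : ℕ) : v F n k * v F n k = 0 := by
  unfold v
  split_ifs with h
  · simpa [NilCoxeter.u] using RingQuot.mkAlgHom_rel F (NilCoxeterRel.sq (F := F) (n := n) ⟨k, h⟩)
  · simp

lemma v_comm (n k l : ℕ) (hkl : k + 1 < l ∨ l + 1 < k) :
    v F n k * v F n l = v F n l * v F n k := by
  unfold v
  split_ifs with h h'
  · simpa [NilCoxeter.u] using
      RingQuot.mkAlgHom_rel F (NilCoxeterRel.comm (F := F) (n := n) ⟨k, h⟩ ⟨l, h'⟩ hkl)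
  all_goals simp

lemma v_braid (n k : ℕ) :
    v F n k * v F n (k + 1) * v F n k = v F n (k + 1) * v F n k * v F n (k + 1) := by
  unfold v
  split_ifs with h h'
  · simpa [NilCoxeter.u] using
      RingQuot.mkAlgHom_rel F (NilCoxeterRel.braid (F := F) (n := n) ⟨k, h⟩ ⟨k + 1, h'⟩ rfl)
  all_goals simp

lemma incl_v (n k : ℕ) (h : k < n - 1) : NilCoxeter.incl F n (v F n k) = v F (n + 1) k := by
  have h' : k < n + 1 - 1 := by omega
  simp only [v, h, h', dif_pos, NilCoxeter.incl, NilCoxeter.u, RingQuot.liftAlgHom_mkAlgHom_apply,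
    FreeAlgebra.lift_ι_apply]
  rfl

lemma exists_lift (n : ℕ) {E : Type} [Semiring E] [Algebra F E] (g : ℕ → E)
    (hsq : ∀ k, k < n - 1 → g k * g k = 0)
    (hcomm : ∀ k l, k < n - 1 → l < n - 1 → k + 1 < l → g k * g l = g l * g k)
    (hbr : ∀ k, k + 1 < n - 1 → g k * g (k + 1) * g k = g (k + 1) * g k * g (k + 1)) :
    ∃ ω : NilCoxeter F n →ₐ[F] E, ∀ k, k < n - 1 → ω (v F n k) = g k := by
  refine ⟨RingQuot.liftAlgHom F ⟨FreeAlgebra.lift F (fun k : Fin (n - 1) => g k), ?_⟩, ?_⟩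
  · rintro x y (⟨i⟩ | ⟨i, j, h⟩ | ⟨i, j, h⟩) <;>
        simp only [map_mul, map_zero, FreeAlgebra.lift_ι_apply]
    · exact hsq _ i.2
    · rcases h with h | h
      · exact hcomm _ _ i.2 j.2 h
      · exact (hcomm _ _ j.2 i.2 h).symm
    · rw [h]; exact hbr _ (by have := j.2; omega)
  · intro k h
    simp only [v, h, dif_pos, NilCoxeter.u, RingQuot.liftAlgHom_mkAlgHom_apply,
      FreeAlgebra.lift_ι_apply]

lemma hom_ext (n : ℕ) {E : Type} [Semiring E] [Algebra F E] {f g : NilCoxeter F n →ₐ[F] E}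
    (h : ∀ k, k < n - 1 → f (v F n k) = g (v F n k)) : f = g := by
  apply RingQuot.ringQuot_ext'
  apply FreeAlgebra.hom_ext
  funext k
  simpa [v, NilCoxeter.u] using h k k.2

lemma gen_induct (n : ℕ) (P : NilCoxeter F n → Prop)
    (hs : ∀ r, P (algebraMap F _ r)) (hg : ∀ k, k < n - 1 → P (v F n k))
    (ha : ∀ x y, P x → P y → P (x + y)) (hm : ∀ x y, P x → P y → P (x * y)) (x) : P x := by
  obtain ⟨x, rfl⟩ := RingQuot.mkAlgHom_surjective F (NilCoxeterRel F n) x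
  induction x using FreeAlgebra.induction with
  | grade0 r => rw [AlgHom.commutes]; exact hs r
  | grade1 k => simpa [v, NilCoxeter.u] using hg k k.2
  | mul a b h1 h2 => rw [map_mul]; exact hm _ _ h1 h2
  | add a b h1 h2 => rw [map_add]; exact ha _ _ h1 h2

/-- The new generator commutes with the smaller algebra. -/
lemma s_comm (n : ℕ) (c : NilCoxeter F n) :
    v F (n + 2) n * NilCoxeter.incl F (n + 1) (NilCoxeter.incl F n c) =
      NilCoxeter.incl F (n + 1) (NilCoxeter.incl F n c) * v F (n + 2) n := by
  induction c using gen_induct with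
  | hs r => simp only [AlgHom.commutes]; exact (Algebra.commutes r _).symm
  | hg k hk =>
    rw [incl_v F n k hk, incl_v F (n + 1) k (by omega)]
    exact v_comm F _ _ _ (by omega)
  | ha x y hx hy => simp only [map_add, mul_add, add_mul, hx, hy]
  | hm x y hx hy => rw [map_mul, map_mul, ← mul_assoc, hx, mul_assoc, hy, mul_assoc]

lemma range_zero (y : NilCoxeter F 1) : ∃ c, NilCoxeter.incl F 0 c = y := by
  induction y using gen_induct with
  | hs r => exact ⟨algebraMap F _ r, AlgHom.commutes _ _⟩
  | hg k hk => omega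
  | ha x y hx hy =>
    obtain ⟨a, rfl⟩ := hx; obtain ⟨b, rfl⟩ := hy; exact ⟨a + b, map_add _ _ _⟩
  | hm x y hx hy =>
    obtain ⟨a, rfl⟩ := hx; obtain ⟨b, rfl⟩ := hy; exact ⟨a * b, map_mul _ _ _⟩

/-- The image of the candidate isomorphism. -/
def Im (n : ℕ) : AddSubmonoid (NilCoxeter F (n + 2)) :=
  AddSubmonoid.closure ({w | ∃ x, w = NilCoxeter.incl F (n + 1) x} ∪
    {w | ∃ a b, w = NilCoxeter.incl F (n + 1) a * v F (n + 2) n * NilCoxeter.incl F (n + 1) b})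

lemma Im_incl (n : ℕ) (x) : NilCoxeter.incl F (n + 1) x ∈ Im F n :=
  AddSubmonoid.subset_closure (Or.inl ⟨x, rfl⟩)

lemma Im_s (n : ℕ) (a b) :
    NilCoxeter.incl F (n + 1) a * v F (n + 2) n * NilCoxeter.incl F (n + 1) b ∈ Im F n :=
  AddSubmonoid.subset_closure (Or.inr ⟨a, b, rfl⟩)

lemma Im_left (n : ℕ) (a) (w) (hw : w ∈ Im F n) : NilCoxeter.incl F (n + 1) a * w ∈ Im F n := by
  induction hw using AddSubmonoid.closure_induction with
  | mem w h =>
    rcases h with ⟨x, rfl⟩ | ⟨x, y, rfl⟩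
    · rw [← map_mul]; exact Im_incl F n _
    · rw [← mul_assoc, ← mul_assoc, ← map_mul]; exact Im_s F n _ _
  | zero => rw [mul_zero]; exact zero_mem _
  | add x y _ _ hx hy => rw [mul_add]; exact add_mem hx hy

lemma Im_right (n : ℕ) (a) (w) (hw : w ∈ Im F n) : w * NilCoxeter.incl F (n + 1) a ∈ Im F n := by
  induction hw using AddSubmonoid.closure_induction with
  | mem w h =>
    rcases h with ⟨x, rfl⟩ | ⟨x, y, rfl⟩
    · rw [← map_mul]; exact Im_incl F n _
    · rw [mul_assoc, ← map_mul]; exact Im_s F n _ _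
  | zero => rw [zero_mul]; exact zero_mem _
  | add x y _ _ hx hy => rw [add_mul]; exact add_mem hx hy

lemma sjs (n : ℕ) (c : NilCoxeter F n) :
    v F (n + 2) n * NilCoxeter.incl F (n + 1) (NilCoxeter.incl F n c) * v F (n + 2) n = 0 := by
  rw [s_comm, mul_assoc, v_sq, mul_zero]

lemma Im_sas (n : ℕ) (hn : ∀ m, n = m + 1 → ∀ w, w ∈ Im F m) (a) :
    v F (n + 2) n * NilCoxeter.incl F (n + 1) a * v F (n + 2) n ∈ Im F n := by
  cases n with
  | zero =>
    obtain ⟨c, rfl⟩ := range_zero F a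
    rw [sjs]; exact zero_mem _
  | succ m =>
    have := hn m rfl a
    induction this using AddSubmonoid.closure_induction with
    | mem w h =>
      rcases h with ⟨x, rfl⟩ | ⟨x, y, rfl⟩
      · rw [sjs]; exact zero_mem _
      · have e : v F (m + 1 + 2) (m + 1) * NilCoxeter.incl F (m + 1 + 1)
          (NilCoxeter.incl F (m + 1) x * v F (m + 2) m * NilCoxeter.incl F (m + 1) y) *
            v F (m + 1 + 2) (m + 1) =
          NilCoxeter.incl F (m + 1 + 1) (NilCoxeter.incl F (m + 1) x * v F (m + 2) m) *
            v F (m + 1 + 2) (m + 1) *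
          NilCoxeter.incl F (m + 1 + 1) (v F (m + 2) m * NilCoxeter.incl F (m + 1) y) := by
          set i := NilCoxeter.incl F (m + 1 + 1) with hi
          set j := NilCoxeter.incl F (m + 1) with hj
          set r := v F (m + 2) m with hr
          set s := v F (m + 1 + 2) (m + 1) with hs
          have hsc : ∀ c, s * i (j c) = i (j c) * s := s_comm F (m + 1)
          have hb : i r * s * i r = s * i r * s := by
            rw [hi, hr, hs, incl_v F (m + 1 + 1) m (by omega)]
            exact v_braid F (m + 3) m
          calc s * i (j x * r * j y) * s
                = (s * i (j x)) * i r * (i (j y) * s) := by simp only [map_mul, mul_assoc]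
              _ = i (j x) * (s * i r * s) * i (j y) := by
                rw [hsc, ← hsc y]; simp only [mul_assoc]
              _ = _ := by rw [← hb]; simp only [map_mul, mul_assoc]
        rw [e]; exact Im_s F _ _ _
    | zero => simp
    | add x y _ _ hx hy => rw [map_add, mul_add, add_mul]; exact add_mem hx hy

lemma Im_top (n : ℕ) : ∀ w, w ∈ Im F n := by
  induction n using Nat.strong_induction_on with
  | _ n ih =>
  have key := Im_sas F n (fun m hm => ih m (by omega))
  have hs : ∀ w ∈ Im F n, v F (n + 2) n * w ∈ Im F n := by
    intro w hw
    induction hw using AddSubmonoid.closure_induction with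
    | mem w h =>
      rcases h with ⟨x, rfl⟩ | ⟨x, y, rfl⟩
      · simpa using Im_s F n 1 x
      · rw [← mul_assoc, ← mul_assoc]; exact Im_right F n _ _ (key x)
    | zero => rw [mul_zero]; exact zero_mem _
    | add x y _ _ hx hy => rw [mul_add]; exact add_mem hx hy
  have : ∀ z, ∀ w ∈ Im F n, z * w ∈ Im F n := by
    intro z
    induction z using gen_induct with
    | hs r =>
      intro w hw
      have := Im_left F n (algebraMap F _ r) w hw
      rwa [AlgHom.commutes] at this
    | hg k hk =>
      intro w hw
      by_cases h : k = n
      · subst h; exact hs w hw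
      · rw [← incl_v F (n + 1) k (by omega)]; exact Im_left F n _ w hw
    | ha x y hx hy => intro w hw; rw [add_mul]; exact add_mem (hx w hw) (hy w hw)
    | hm x y hx hy => intro w hw; rw [mul_assoc]; exact hx _ (hy w hw)
  intro w
  have h1 := this w 1 (by simpa using Im_incl F n 1)
  rwa [mul_one] at h1

lemma im_induct (n : ℕ) {P : NilCoxeter F (n + 2) → Prop}
    (h1 : ∀ x, P (NilCoxeter.incl F (n + 1) x))
    (h2 : ∀ a b, P (NilCoxeter.incl F (n + 1) a * v F (n + 2) n * NilCoxeter.incl F (n + 1) b))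
    (ha : ∀ x y, P x → P y → P (x + y)) (w) : P w := by
  have h0 : P 0 := by simpa using h1 0
  have hw := Im_top F n w
  induction hw using AddSubmonoid.closure_induction with
  | mem w h =>
    rcases h with ⟨x, rfl⟩ | ⟨x, y, rfl⟩
    · exact h1 x
    · exact h2 x y
  | zero => exact h0
  | add x y _ _ hx hy => exact ha _ _ hx hy

/-- From a good map to the inverse isomorphism. -/
lemma exists_Psi (n : ℕ) (φ : NilCoxeter F (n + 1) →ₗ[F] TQ (NilCoxeter.incl F n))
    (h : Good (NilCoxeter.incl F n) (v F (n + 1) (n - 1)) φ) :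
    ∃ Ψ : NilCoxeter F (n + 2) →ₗ[F] TQ (NilCoxeter.incl F n) × NilCoxeter F (n + 1),
      (∀ x, Ψ (NilCoxeter.incl F (n + 1) x) = (0, x)) ∧
      (∀ a b, Ψ (NilCoxeter.incl F (n + 1) a * v F (n + 2) n * NilCoxeter.incl F (n + 1) b) =
        (tq (NilCoxeter.incl F n) a b, 0)) := by
  obtain ⟨ω, hω⟩ := exists_lift F (n + 2)
    (E := Module.End F (TQ (NilCoxeter.incl F n) × NilCoxeter F (n + 1)))
    (fun k => if k < n then lam (NilCoxeter.incl F n) (v F (n + 1) k)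
      else Sop (NilCoxeter.incl F n) φ h.right)
    (by
      intro k hk
      split_ifs
      · rw [← map_mul, v_sq, map_zero]
      · exact h.S_sq)
    (by
      intro k l hk hl hkl
      rw [if_pos (show k < n by omega)]
      split_ifs
      · rw [← map_mul, ← map_mul, v_comm _ _ _ _ (Or.inl hkl)]
      · rw [← incl_v F n k (by omega)]
        exact (h.S_comm _).symm)
    (by
      intro k hk
      rw [if_pos (show k < n by omega)]
      split_ifs
      · simp only [← map_mul, v_braid]
      · have : k = n - 1 := by omega
        subst this
        exact h.S_braid)
  have hincl : ω.comp (NilCoxeter.incl F (n + 1)) = lam (NilCoxeter.incl F n) := by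
    apply hom_ext
    intro k hk
    rw [AlgHom.comp_apply, incl_v F (n + 1) k hk, hω k (by omega), if_pos (by omega)]
  have hincl' : ∀ x, ω (NilCoxeter.incl F (n + 1) x) = lam (NilCoxeter.incl F n) x :=
    fun x => congrArg (fun f => f x) hincl
  have hS := hω n (by omega)
  rw [if_neg (by omega)] at hS
  refine ⟨(LinearMap.applyₗ ((0 : TQ (NilCoxeter.incl F n)), (1 : NilCoxeter F (n + 1)))).comp
    ω.toLinearMap, ?_, ?_⟩
  · intro x
    simp [hincl']
  · intro a b
    simp [hincl', hS]

lemma exists_good (n : ℕ) : ∃ φ : NilCoxeter F (n + 1) →ₗ[F] TQ (NilCoxeter.incl F n),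
    Good (NilCoxeter.incl F n) (v F (n + 1) (n - 1)) φ := by
  induction n with
  | zero =>
    have hv : v F (0 + 1) (0 - 1) = 0 := by simp [v]
    have hR : ∀ c a, (0 : NilCoxeter F (0 + 1) →ₗ[F] TQ (NilCoxeter.incl F 0))
      (a * NilCoxeter.incl F 0 c) = R _ (NilCoxeter.incl F 0 c)
        ((0 : NilCoxeter F (0 + 1) →ₗ[F] TQ (NilCoxeter.incl F 0)) a) := by simp
    refine ⟨0, by simp, hR, by simp, by simp, by rw [hv]; simp, by simp⟩
  | succ n ih =>
    obtain ⟨φ₀, h₀⟩ := ih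
    obtain ⟨Ψ, hΨ1, hΨ2⟩ := exists_Psi F n φ₀ h₀
    set i := NilCoxeter.incl F (n + 1) with hi
    set s := v F (n + 2) n with hs
    have hss : s * s = 0 := v_sq F _ _
    have hsc : ∀ c, s * i (NilCoxeter.incl F n c) = i (NilCoxeter.incl F n c) * s := s_comm F n
    let f : NilCoxeter F (n + 1) →ₗ[F] NilCoxeter F (n + 1) →ₗ[F] TQ i :=
      (tq i).compl₁₂ ((LinearMap.mulRight F s).comp i.toLinearMap)
        ((LinearMap.mulLeft F s).comp i.toLinearMap)
    have hf : ∀ a b, f a b = tq i (i a * s) (s * i b) := fun a b => rfl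
    let φ : NilCoxeter F (n + 2) →ₗ[F] TQ i :=
      (tlift (NilCoxeter.incl F n) f (by
        intro c x y
        rw [hf, hf, map_mul i, mul_assoc, ← hsc, ← mul_assoc, tq_bal, map_mul i,
          ← mul_assoc, ← mul_assoc, hsc])).comp ((LinearMap.fst F _ _).comp Ψ)
    have hφ1 : ∀ x, φ (i x) = 0 := by
      intro x; simp [φ, hΨ1]
    have hφ2 : ∀ a b, φ (i a * s * i b) = tq i (i a * s) (s * i b) := by
      intro a b; simp [φ, hΨ2, hf]
    have hleft : ∀ c a, φ (i c * a) = L i (i c) (φ a) := by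
      intro c a
      induction a using im_induct with
      | h1 x => rw [← hi, ← map_mul, hφ1, hφ1, map_zero]
      | h2 a b =>
        rw [← hi, ← hs, ← mul_assoc, ← mul_assoc, ← map_mul, hφ2, hφ2, L_tq, map_mul i, mul_assoc]
      | ha x y hx hy => rw [mul_add, map_add, hx, hy, map_add, map_add]
    have hright : ∀ c a, φ (a * i c) = R i (i c) (φ a) := by
      intro c a
      induction a using im_induct with
      | h1 x => rw [← hi, ← map_mul, hφ1, hφ1, map_zero]
      | h2 a b =>
        rw [← hi, ← hs, mul_assoc, ← map_mul, hφ2, hφ2, R_tq, map_mul i, mul_assoc]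
      | ha x y hx hy => rw [add_mul, map_add, hx, hy, map_add, map_add]
    have hφs : ∀ a, φ (i a * s) = tq i (i a * s) s := by
      intro a
      have := hφ2 a 1
      simpa using this
    -- the key identity
    have key : ∀ y, R i s (φ (s * i y * s)) = L i s (φ (s * i y * s)) := by
      intro y
      have hjs : ∀ c, s * i (NilCoxeter.incl F n c) * s = 0 := sjs F n
      clear_value φ f
      cases n with
      | zero =>
        obtain ⟨c, rfl⟩ := range_zero F y
        rw [hjs]; simp
      | succ m =>
        induction y using im_induct with
        | h1 x => rw [hjs]; simp
        | h2 p q =>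
          set j := NilCoxeter.incl F (m + 1) with hj
          set r := v F (m + 2) m with hr
          have hb : i r * s * i r = s * i r * s := by
            rw [hi, hr, hs, incl_v F (m + 1 + 1) m (by omega)]
            exact v_braid F (m + 3) m
          have e : s * i (j p * r * j q) * s = i (j p * r) * s * i (r * j q) := by
            calc s * i (j p * r * j q) * s
                = (s * i (j p)) * i r * (i (j q) * s) := by simp only [map_mul, mul_assoc]
              _ = i (j p) * (s * i r * s) * i (j q) := by
                rw [hsc, ← hsc q]; simp only [mul_assoc]
              _ = _ := by rw [← hb]; simp only [map_mul, mul_assoc]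
          rw [e, hφ2, R_tq, L_tq]
          have e1 : s * i (r * j q) * s = i r * (s * (i (r * j q))) := by
            calc s * i (r * j q) * s = s * i r * (i (j q) * s) := by
                  simp only [map_mul, mul_assoc]
              _ = (s * i r * s) * i (j q) := by rw [← hsc q]; simp only [mul_assoc]
              _ = _ := by rw [← hb]; simp only [map_mul, mul_assoc]
          have e2 : s * (i (j p * r) * s) = i (j p * r) * s * i r := by
            calc s * (i (j p * r) * s) = (s * i (j p)) * i r * s := by
                  simp only [map_mul, mul_assoc]
              _ = i (j p) * (s * i r * s) := by rw [hsc]; simp only [mul_assoc]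
              _ = _ := by rw [← hb]; simp only [map_mul, mul_assoc]
          rw [e1, e2, tq_bal]
        | ha x y hx hy => simp only [map_add, mul_add, add_mul, hx, hy]
    refine ⟨φ, hleft, hright, ?_, ?_, ?_, ?_⟩
    · simpa using hφ1 1
    · intro a
      induction a using im_induct with
      | h1 x => rw [← hi, hφ1, map_zero]
      | h2 a b =>
        rw [← hi, ← hs, hφ2, sg_tq, hφs, R_tq, ← mul_assoc, hss, zero_mul, map_zero]
      | ha x y hx hy => rw [map_add, map_add, hx, hy, add_zero]
    · have := hφ2 1 1
      simpa using this
    · intro a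
      change sg i φ hright (L i s (φ a)) = L i s (φ (s * a))
      induction a using im_induct with
      | h1 x =>
        rw [← hi, hφ1, map_zero, map_zero]
        have := hφ2 1 x
        rw [map_one, one_mul] at this
        rw [this, L_tq, hss, map_zero, LinearMap.zero_apply]
      | h2 a b =>
        rw [← hi, ← hs, hφ2, L_tq, sg_tq, R_mul, ← mul_assoc, key, ← mul_assoc, ← mul_assoc,
          hright, L_R]
      | ha x y hx hy => rw [mul_add, map_add, map_add, map_add, hx, hy, map_add, map_add]

end N

end NCX

/-- For each `n ≥ 1` (written here as `n + 1`), there is an isomorphism of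
`(N_{n+1}, N_{n+1})`-bimodules `N_{n+2} ≅ (N_{n+1} ⊗_{N_n} N_{n+1}) ⊕ N_{n+1}`, where the
summand `N_{n+1}` maps in via the inclusion and the summand `N_{n+1} ⊗_{N_n} N_{n+1}`
maps in via `a ⊗ b ↦ a u_{n+1} b`.  The tensor product `T = N_{n+1} ⊗_{N_n} N_{n+1}` is
described by its universal property: `τ` is the canonical balanced biadditive map, with
left and right `N_{n+1}`-actions as indicated. -/
theorem stmt_12 (F : Type) [Field F] (n : ℕ)
    (T : Type) [AddCommGroup T] [Module (NilCoxeter F (n + 1)) T]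
    [Module (NilCoxeter F (n + 1))ᵐᵒᵖ T]
    [SMulCommClass (NilCoxeter F (n + 1)) (NilCoxeter F (n + 1))ᵐᵒᵖ T]
    (τ : NilCoxeter F (n + 1) → NilCoxeter F (n + 1) → T)
    (hadd₁ : ∀ x x' y, τ (x + x') y = τ x y + τ x' y)
    (hadd₂ : ∀ x y y', τ x (y + y') = τ x y + τ x y')
    (hbal : ∀ (c : NilCoxeter F n) x y,
      τ (x * NilCoxeter.incl F n c) y = τ x (NilCoxeter.incl F n c * y))
    (hleft : ∀ (a : NilCoxeter F (n + 1)) x y, a • τ x y = τ (a * x) y)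
    (hright : ∀ (a : NilCoxeter F (n + 1)) x y,
      MulOpposite.op a • τ x y = τ x (y * a))
    (huniv : ∀ (X : Type) [AddCommGroup X]
      (f : NilCoxeter F (n + 1) → NilCoxeter F (n + 1) → X),
      (∀ x x' y, f (x + x') y = f x y + f x' y) →
      (∀ x y y', f x (y + y') = f x y + f x y') →
      (∀ (c : NilCoxeter F n) x y,
        f (x * NilCoxeter.incl F n c) y = f x (NilCoxeter.incl F n c * y)) →
      ∃! h : T →+ X, ∀ x y, h (τ x y) = f x y) :
    ∃ e : T × NilCoxeter F (n + 1) ≃+ NilCoxeter F (n + 2),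
      (∀ (a : NilCoxeter F (n + 1)) (t : T) (x : NilCoxeter F (n + 1)),
        e (a • t, a * x) = NilCoxeter.incl F (n + 1) a * e (t, x)) ∧
      (∀ (a : NilCoxeter F (n + 1)) (t : T) (x : NilCoxeter F (n + 1)),
        e (MulOpposite.op a • t, x * a) = e (t, x) * NilCoxeter.incl F (n + 1) a) ∧
      (∀ x : NilCoxeter F (n + 1), e (0, x) = NilCoxeter.incl F (n + 1) x) ∧
      (∀ a b : NilCoxeter F (n + 1),
        e (τ a b, 0) = NilCoxeter.incl F (n + 1) a *
          NilCoxeter.u F (n + 2) (Fin.last n) * NilCoxeter.incl F (n + 1) b) := by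
  classical
  obtain ⟨φ, hφ⟩ := NCX.exists_good F n
  obtain ⟨Ψ, hΨ1, hΨ2⟩ := NCX.exists_Psi F n φ hφ
  have hu : NilCoxeter.u F (n + 2) (Fin.last n) = NCX.v F (n + 2) n := by
    have h : n < n + 2 - 1 := by omega
    simp only [NCX.v, h, dif_pos]
    rfl
  rw [hu]
  set s := NCX.v F (n + 2) n with hs
  set i := NilCoxeter.incl F (n + 1) with hi
  letI : AddCommGroup (NilCoxeter F (n + 2)) := Module.addCommMonoidToAddCommGroup F
  letI : AddCommGroup (NilCoxeter F (n + 1)) := Module.addCommMonoidToAddCommGroup F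
  -- forward map
  obtain ⟨g, hg, -⟩ := huniv (NilCoxeter F (n + 2)) (fun a b => i a * s * i b)
    (by intro x x' y; simp only [map_add, add_mul])
    (by intro x y y'; simp only [map_add, mul_add])
    (by
      intro c x y
      have := NCX.s_comm F n c
      simp only [map_mul, mul_assoc]
      rw [← mul_assoc s, this, mul_assoc])
  -- additive maps out of `T`
  have text : ∀ (X : Type) [AddCommGroup X] (f f' : T →+ X),
      (∀ x y, f (τ x y) = f' (τ x y)) → f = f' := by
    intro X _ f f' hff
    obtain ⟨k, -, hk⟩ := huniv X (fun x y => f (τ x y))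
      (by intro x x' y; simp only [hadd₁, map_add])
      (by intro x y y'; simp only [hadd₂, map_add])
      (by intro c x y; simp only [hbal])
    rw [hk f (fun _ _ => rfl), hk f' (fun x y => (hff x y).symm)]
  -- comparison with the concrete tensor product
  letI : Module F T := Module.compHom T (algebraMap F (NilCoxeter F (n + 1)))
  have hsm : ∀ (r : F) (t : T), r • t = algebraMap F (NilCoxeter F (n + 1)) r • t :=
    fun _ _ => rfl
  let θ : NCX.TQ (NilCoxeter.incl F n) →ₗ[F] T :=
    NCX.tlift (NilCoxeter.incl F n) (LinearMap.mk₂ F τ hadd₁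
      (by intro r x y; rw [hsm, hleft, Algebra.smul_def]) hadd₂
      (by
        intro r x y
        have := hbal (algebraMap F _ r) x y
        rw [AlgHom.commutes] at this
        rw [hsm, hleft, Algebra.smul_def, ← this, Algebra.commutes])) hbal
  have hθ : ∀ x y, θ (NCX.tq (NilCoxeter.incl F n) x y) = τ x y := by
    intro x y
    exact NCX.tlift_tq _ _ _ x y
  let fw : T × NilCoxeter F (n + 1) →+ NilCoxeter F (n + 2) :=
    AddMonoidHom.coprod g (i : NilCoxeter F (n + 1) →+ NilCoxeter F (n + 2))
  have hfw : ∀ t x, fw (t, x) = g t + i x := fun _ _ => rfl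
  let bw : NilCoxeter F (n + 2) →+ T × NilCoxeter F (n + 1) :=
    ((θ.prodMap LinearMap.id).comp Ψ).toAddMonoidHom
  have hbw : ∀ w, bw w = (θ (Ψ w).1, (Ψ w).2) := fun _ => rfl
  have h1 : bw.comp g = AddMonoidHom.inl T (NilCoxeter F (n + 1)) := by
    refine text _ _ _ ?_
    intro x y
    rw [AddMonoidHom.comp_apply, hg, hbw, hΨ2, hθ]
    rfl
  have hl : Function.LeftInverse bw fw := by
    rintro ⟨t, x⟩
    have h1' : bw (g t) = (t, 0) := congrArg (fun f => f t) h1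
    rw [hfw, map_add, h1', hbw, hΨ1]
    simp
  have hr : Function.RightInverse bw fw := by
    intro w
    induction w using NCX.im_induct with
    | h1 x => rw [hbw, hΨ1, hfw]; simp [hi]
    | h2 a b => rw [hbw, hΨ2, hfw]; simp [hθ, hg, hi, hs]
    | ha x y hx hy => rw [map_add, map_add, hx, hy]
  have gl : ∀ a t, g (a • t) = i a * g t := by
    intro a t
    have : g.comp (DistribSMul.toAddMonoidHom T a) = (AddMonoidHom.mulLeft (i a)).comp g := by
      refine text _ _ _ ?_
      intro x y
      simp only [AddMonoidHom.comp_apply, DistribSMul.toAddMonoidHom_apply, hleft, hg,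
        AddMonoidHom.coe_mulLeft, map_mul, mul_assoc]
    exact congrArg (fun f => f t) this
  have gr : ∀ a t, g (MulOpposite.op a • t) = g t * i a := by
    intro a t
    have : g.comp (DistribSMul.toAddMonoidHom T (MulOpposite.op a)) =
        (AddMonoidHom.mulRight (i a)).comp g := by
      refine text _ _ _ ?_
      intro x y
      simp only [AddMonoidHom.comp_apply, DistribSMul.toAddMonoidHom_apply, hright, hg,
        AddMonoidHom.mulRight_apply, map_mul, mul_assoc]
    exact congrArg (fun f => f t) this
  refine ⟨{ fw with invFun := bw, left_inv := hl, right_inv := hr }, ?_, ?_, ?_, ?_⟩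
  · intro a t x
    change fw _ = _ * fw _
    rw [hfw, hfw, gl, map_mul, mul_add]
  · intro a t x
    change fw _ = fw _ * _
    rw [hfw, hfw, gr, map_mul, add_mul]
  · intro x
    change fw _ = _
    rw [hfw, map_zero, zero_add]
  · intro a b
    change fw _ = _
    rw [hfw, map_zero, add_zero, hg]
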